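/- Let X be a real random variable with an absolutely continuous density f whose support is ℝ. If ρ is a measurable function with E[|ρ(X)|] < ∞ satisfying E[ρ(X)φ(X)] = −E[φ'(X)] for all φ ∈ C_c^∞(ℝ), then ρ(x) = f'(x)/f(x) for almost every x (with respect to the law of X); in particular the score is unique up to almost-everywhere equality. -/

import Mathlib

open MeasureTheory ProbabilityTheory Real

lemma exists_radius {φ : ℝ → ℝ} (hc : HasCompactSupport φ) :
    ∃ R : ℝ, 0 < R ∧ ∀ x, R ≤ |x| → x ∉ tsupport φ := by
  obtain ⟨R, hR⟩ := hc.isCompact.isBounded.subset_closedBall 0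
  refine ⟨max R 0 + 1, by positivity, fun x hx hx' => ?_⟩
  have h1 := hR hx'
  rw [mem_closedBall_zero_iff, Real.norm_eq_abs] at h1
  have := le_max_left R 0
  linarith

lemma support_sub_Ioc {φ ψ : ℝ → ℝ} {R : ℝ} (hR : ∀ x, R ≤ |x| → x ∉ tsupport φ)
    (hψ : Function.support ψ ⊆ tsupport φ) : Function.support ψ ⊆ Set.Ioc (-R) R := by
  intro x hx
  have h1 : |x| < R := by
    by_contra hcon
    exact hR x (not_lt.mp hcon) (hψ hx)
  rw [abs_lt] at h1
  exact ⟨h1.1, h1.2.le⟩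

lemma parts_aux {h : ℝ → ℝ} (hh : Integrable h) {φ : ℝ → ℝ} (hφ : ContDiff ℝ (⊤ : ℕ∞) φ)
    (hc : HasCompactSupport φ) :
    ∫ x, h x * φ x = -∫ x, deriv φ x * ∫ t in (0 : ℝ)..x, h t := by
  obtain ⟨R, hR0, hR⟩ := exists_radius hc
  have hacG : AbsolutelyContinuousOnInterval (fun x => ∫ t in (0 : ℝ)..x, h t) (-R) R :=
    hh.intervalIntegrable.absolutelyContinuousOnInterval_intervalIntegral
      (by rw [Set.uIcc_of_le (by linarith)]; constructor <;> linarith)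
  have hacφ : AbsolutelyContinuousOnInterval φ (-R) R :=
    ContDiffOn.absolutelyContinuousOnInterval ((hφ.of_le (by exact_mod_cast le_top)).contDiffOn)
  have key := hacG.integral_mul_deriv_eq_deriv_mul hacφ
  have z1 : φ R = 0 := image_eq_zero_of_notMem_tsupport (hR R (le_abs_self R))
  have z2 : φ (-R) = 0 := image_eq_zero_of_notMem_tsupport (hR (-R) (by rw [abs_neg]; exact le_abs_self R))
  rw [z1, z2] at key
  have e1 : ∫ x in (-R)..R, deriv (fun x => ∫ t in (0 : ℝ)..x, h t) x * φ x
      = ∫ x in (-R)..R, h x * φ x := by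
    apply intervalIntegral.integral_congr_ae
    filter_upwards [LocallyIntegrable.ae_hasDerivAt_integral hh.locallyIntegrable] with x hx _
    rw [(hx 0).deriv]
  rw [e1] at key
  have s1 : Function.support (fun x => (∫ t in (0 : ℝ)..x, h t) * deriv φ x) ⊆ Set.Ioc (-R) R :=
    support_sub_Ioc hR fun x hx => support_deriv_subset (right_ne_zero_of_mul hx)
  have s2 : Function.support (fun x => h x * φ x) ⊆ Set.Ioc (-R) R :=
    support_sub_Ioc hR fun x hx => subset_tsupport _ (right_ne_zero_of_mul hx)
  rw [intervalIntegral.integral_eq_integral_of_support_subset s1,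
    intervalIntegral.integral_eq_integral_of_support_subset s2] at key
  simp only [mul_zero, sub_zero, zero_sub] at key
  simp_rw [mul_comm (deriv φ _)]
  rw [key, neg_neg]

lemma primitive_aux {k : ℝ → ℝ} (hk : ContDiff ℝ (⊤ : ℕ∞) k)
    (hc : HasCompactSupport k) (h0 : ∫ x, k x = 0) :
    ∃ φ : ℝ → ℝ, ContDiff ℝ (⊤ : ℕ∞) φ ∧ HasCompactSupport φ ∧ deriv φ = k := by
  obtain ⟨R, hR0, hR⟩ := exists_radius hc
  have hd : ∀ x, HasDerivAt (fun x => ∫ t in (-R)..x, k t) (k x) x := fun x =>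
    intervalIntegral.integral_hasDerivAt_right (hk.continuous.intervalIntegrable _ _)
      (hk.continuous.stronglyMeasurableAtFilter _ _) hk.continuous.continuousAt
  have hderiv : deriv (fun x => ∫ t in (-R)..x, k t) = k := funext fun x => (hd x).deriv
  refine ⟨fun x => ∫ t in (-R)..x, k t, ?_, ?_, hderiv⟩
  · refine contDiff_infty_iff_deriv.mpr ⟨fun x => (hd x).differentiableAt, ?_⟩
    rw [hderiv]; exact hk
  · refine HasCompactSupport.intro (isCompact_Icc (a := -R) (b := R)) fun x hx => ?_
    rw [Set.mem_Icc, not_and_or, not_le, not_le] at hx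
    rcases hx with hx | hx
    · rw [intervalIntegral.integral_congr (g := fun _ => (0 : ℝ))]
      · simp
      · intro t ht
        rw [Set.uIcc_of_ge hx.le] at ht
        refine image_eq_zero_of_notMem_tsupport (hR t ?_)
        rw [le_abs]; right; linarith [ht.2]
    · rw [intervalIntegral.integral_eq_integral_of_support_subset, h0]
      exact (support_sub_Ioc hR (subset_tsupport k)).trans (Set.Ioc_subset_Ioc_right hx.le)

lemma duBois {u : ℝ → ℝ} (hu : Continuous u)
    (h : ∀ φ : ℝ → ℝ, ContDiff ℝ (⊤ : ℕ∞) φ → HasCompactSupport φ → ∫ x, deriv φ x * u x = 0) :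
    ∃ c, ∀ x, u x = c := by
  let b : ContDiffBump (0 : ℝ) := default
  let ψ : ℝ → ℝ := b.normed volume
  have hψ : ContDiff ℝ (⊤ : ℕ∞) ψ := b.contDiff_normed
  have hψc : HasCompactSupport ψ := b.hasCompactSupport_normed
  have hψ1 : ∫ x, ψ x = 1 := b.integral_normed
  have hint : ∀ g : ℝ → ℝ, Continuous g → HasCompactSupport g →
      Integrable (fun x => g x * u x) := fun g hg hgc =>
    (hg.mul hu).integrable_of_hasCompactSupport hgc.mul_right
  set c := ∫ x, ψ x * u x with hcdef
  refine ⟨c, ?_⟩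
  have hae : ∀ᵐ x, u x - c = 0 := by
    refine ae_eq_zero_of_integral_contDiff_smul_eq_zero
      ((hu.sub continuous_const).locallyIntegrable) fun g hg hgc => ?_
    have gi : Integrable g := hg.continuous.integrable_of_hasCompactSupport hgc
    have ψi : Integrable ψ := hψ.continuous.integrable_of_hasCompactSupport hψc
    obtain ⟨φ, h1, h2, h3⟩ := primitive_aux (k := fun x => g x - (∫ y, g y) * ψ x)
      (hg.sub (contDiff_const.mul hψ)) (hgc.sub hψc.mul_left)
      (by rw [integral_sub gi (ψi.const_mul _), integral_const_mul, hψ1]; ring)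
    have h4 := h φ h1 h2
    rw [h3] at h4
    have e : ∀ x, (g x - (∫ y, g y) * ψ x) * u x
        = g x * u x - (∫ y, g y) * (ψ x * u x) := fun x => by ring
    simp_rw [e] at h4
    rw [integral_sub (hint g hg.continuous hgc)
      ((hint ψ hψ.continuous hψc).const_mul _), integral_const_mul, ← hcdef] at h4
    simp_rw [smul_eq_mul, mul_sub]
    rw [integral_sub (hint g hg.continuous hgc) (gi.mul_const _), integral_mul_const]
    exact h4
  have := Measure.eq_of_ae_eq (μ := volume) (f := u) (g := fun _ => c)
    (by filter_upwards [hae] with x hx; linarith) hu continuous_const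
  exact fun x => congrFun this x



/-- Uniqueness of the score: if `X` has positive differentiable density `f` on `ℝ` and `ρ`
satisfies the integration by parts identity, then `ρ = f'/f` almost everywhere w.r.t. the
law of `X`. -/
theorem stmt7 {Ω : Type*} [MeasurableSpace Ω] (μ : Measure Ω) [IsProbabilityMeasure μ]
    (X : Ω → ℝ) (hX : Measurable X)
    (f f' : ℝ → ℝ) (hfpos : ∀ x, 0 < f x)
    (hf : ∀ x, HasDerivAt f (f' x) x)
    (hdens : Measure.map X μ = MeasureTheory.volume.withDensity (fun x => ENNReal.ofReal (f x)))
    (ρ : ℝ → ℝ) (hρm : Measurable ρ)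
    (hρint : Integrable (fun ω => ρ (X ω)) μ)
    (hscore : ∀ φ : ℝ → ℝ, ContDiff ℝ (⊤ : ℕ∞) φ → HasCompactSupport φ →
      ∫ ω, ρ (X ω) * φ (X ω) ∂μ = -∫ ω, deriv φ (X ω) ∂μ) :
    ∀ᵐ x ∂(Measure.map X μ), ρ x = f' x / f x := by

  have hfc : Continuous f := continuous_iff_continuousAt.mpr fun x => (hf x).continuousAt
  have hfm : Measurable fun x => ENNReal.ofReal (f x) := hfc.measurable.ennreal_ofReal
  have hI : ∀ g : ℝ → ℝ, Measurable g → ∫ ω, g (X ω) ∂μ = ∫ x, f x * g x := by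
    intro g hg
    rw [← integral_map (φ := X) hX.aemeasurable hg.aestronglyMeasurable, hdens,
      integral_withDensity_eq_integral_toReal_smul hfm (by simp)]
    simp only [ENNReal.toReal_ofReal (hfpos _).le, smul_eq_mul]
  have hh : Integrable fun x => f x * ρ x := by
    have h1 : Integrable ρ (Measure.map X μ) :=
      (integrable_map_measure hρm.aestronglyMeasurable hX.aemeasurable).mpr hρint
    rw [hdens, integrable_withDensity_iff_integrable_smul' hfm (by simp)] at h1
    simpa only [ENNReal.toReal_ofReal (hfpos _).le, smul_eq_mul] using h1
  have hGc : Continuous fun x => ∫ t in (0 : ℝ)..x, f t * ρ t :=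
    intervalIntegral.continuous_primitive (fun a b => hh.intervalIntegrable) 0
  obtain ⟨c, hc⟩ := duBois (u := fun x => f x - ∫ t in (0 : ℝ)..x, f t * ρ t) (hfc.sub hGc) (by
    intro φ hφ hφc
    have hdc : Continuous (deriv φ) := hφ.continuous_deriv (by exact_mod_cast le_top)
    have h1 := hscore φ hφ hφc
    rw [hI (fun x => ρ x * φ x) (hρm.mul hφ.continuous.measurable),
      hI (deriv φ) hdc.measurable] at h1
    have h2 := parts_aux hh hφ hφc
    simp_rw [← mul_assoc] at h1
    simp_rw [mul_sub]
    have i1 : Integrable (fun x => deriv φ x * f x) :=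
      (hdc.mul hfc).integrable_of_hasCompactSupport hφc.deriv.mul_right
    have i2 : Integrable (fun x => deriv φ x * ∫ t in (0 : ℝ)..x, f t * ρ t) :=
      (hdc.mul hGc).integrable_of_hasCompactSupport hφc.deriv.mul_right
    rw [integral_sub i1 i2]
    simp_rw [mul_comm (deriv φ _) (f _)]
    linarith)
  rw [hdens]
  refine (withDensity_absolutelyContinuous _ _).ae_le ?_
  filter_upwards [LocallyIntegrable.ae_hasDerivAt_integral hh.locallyIntegrable] with x hx
  have h1 : HasDerivAt f (f x * ρ x) x := by
    have h2 := (hx 0).add_const c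
    have e : f = fun y => (∫ t in (0 : ℝ)..y, f t * ρ t) + c := by
      funext y; linarith [hc y]
    rw [← e] at h2
    exact h2
  rw [(hf x).unique h1, mul_div_cancel_left₀ _ (hfpos x).ne']
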